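/- arXiv:2603.04357 — 6 statements merged into one kernel-verified Lean document; each statement's English description precedes it below -/
import Mathlib

section
/- Let n ≥ 1, let 1 ≤ k ≤ n, and let b ∈ {0,1}. For the Pauli string M = b·Z̄ + M_k (i.e., k X-factors on the first k qubits, together with one Z-factor on the first qubit when b = 1), the weight enumerator of the coset M + S modulo the stabilizer group S of the [[n,1]] Z-type repetition code equals g_{k,n}(x,y) = (1/2)·(x+y)^(n−k)·(2y)^k, for all real x, y. -/
/-- The weight of an `n`-qubit Pauli string: the number of non-identity tensor factors. -/
def wt {n : ℕ} (v : Fin n → ZMod 2 × ZMod 2) : ℕ :=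
  (Finset.univ.filter fun i => v i ≠ (0, 0)).card

/-- The weight enumerator of a finite set of `n`-qubit Pauli strings. -/
noncomputable def enum {n : ℕ} (T : Finset (Fin n → ZMod 2 × ZMod 2)) (x y : ℝ) : ℝ :=
  ∑ v ∈ T, x ^ (n - wt v) * y ^ wt v

/-- The stabilizer group of the `[[n,1]]` Z-type repetition code: Pauli strings with no
X-part and even total Z-weight. -/
def repStab (n : ℕ) : Finset (Fin n → ZMod 2 × ZMod 2) :=
  Finset.univ.filter fun v => (∀ i, (v i).1 = 0) ∧ (∑ i, (v i).2) = 0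

/-- The logical-Z representative: `Z ⊗ I^{⊗(n-1)}`. -/
def Zbar (n : ℕ) : Fin n → ZMod 2 × ZMod 2 :=
  fun i => if (i : ℕ) = 0 then (0, 1) else (0, 0)

/-- `Mk n k`: the Pauli string with X-factors on the first `k` qubits. -/
def Mk (n k : ℕ) : Fin n → ZMod 2 × ZMod 2 :=
  fun i => if (i : ℕ) < k then (1, 0) else (0, 0)

/-!
The monomial `x ^ (n - wt v) * y ^ wt v` is a product of local factors over the qubits. The coset of
a Pauli string `u` is swept out by the even Z-patterns, and the parity constraint is the average of
the two characters of `ZMod 2`, so the enumerator is half the sum of two products over the qubits: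
one of sums and one of differences of local factors. A qubit on which `u` has an X-factor has weight
one whatever its Z-factor: it contributes `2 * y` to the first product and annihilates the second.
-/

theorem prod_univ_ite_const {ι M : Type*} [Fintype ι] [CommMonoid M] (p : ι → Prop)
    [DecidablePred p] (x y : M) :
    ∏ i, (if p i then x else y)
      = x ^ (Fintype.card ι - (Finset.univ.filter fun i => ¬p i).card)
        * y ^ (Finset.univ.filter fun i => ¬p i).card := by
  have hcard : (Finset.univ.filter p).card + (Finset.univ.filter fun i => ¬p i).card
      = Fintype.card ι :=
    Finset.card_filter_add_card_filter_not p
  rw [Finset.prod_ite, Finset.prod_const, Finset.prod_const, ← hcard, Nat.add_sub_cancel]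

theorem sum_pi_prod_zmod_two {ι R : Type*} [Fintype ι] [DecidableEq ι] [CommSemiring R]
    (f : ι → ZMod 2 → R) :
    ∑ z : ι → ZMod 2, ∏ i, f i (z i) = ∏ i, (f i 0 + f i 1) := by
  rw [← Fintype.prod_sum]
  exact Finset.prod_congr rfl fun i _ => Fin.sum_univ_two (f i)

section EvenPatterns

variable {R : Type*} [CommRing R]

/-- The sign character `c ↦ (-1) ^ c` of `ZMod 2`, used to detect the parity of a binary pattern. -/
def signChar (R : Type*) [CommRing R] : AddChar (ZMod 2) R :=
  AddChar.zmodChar 2 (neg_one_sq (R := R))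

theorem signChar_one : signChar R 1 = -1 :=
  pow_one (-1)

theorem one_add_signChar (c : ZMod 2) : 1 + signChar R c = if c = 0 then 2 else 0 := by
  obtain rfl | hc := eq_or_ne c 0
  · rw [AddChar.map_zero_eq_one, if_pos rfl, one_add_one_eq_two]
  · obtain rfl : c = 1 := by revert c; decide
    rw [if_neg hc, signChar_one, add_neg_cancel]

theorem two_mul_sum_even_prod {ι : Type*} [Fintype ι] [DecidableEq ι] (f : ι → ZMod 2 → R) :
    2 * ∑ z : ι → ZMod 2 with ∑ i, z i = 0, ∏ i, f i (z i)
      = ∏ i, (f i 0 + f i 1) + ∏ i, (f i 0 - f i 1) := by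
  have hsigned : ∑ z : ι → ZMod 2, signChar R (∑ i, z i) * ∏ i, f i (z i)
      = ∏ i, (f i 0 - f i 1) := by
    have hsign (z : ι → ZMod 2) : signChar R (∑ i, z i) = ∏ i, signChar R (z i) :=
      map_prod (signChar R).toMonoidHom (fun i => Multiplicative.ofAdd (z i)) Finset.univ
    simp only [hsign, ← Finset.prod_mul_distrib]
    rw [sum_pi_prod_zmod_two fun i c => signChar R c * f i c]
    simp only [AddChar.map_zero_eq_one, signChar_one, one_mul, neg_one_mul, sub_eq_add_neg]
  calc 2 * ∑ z : ι → ZMod 2 with ∑ i, z i = 0, ∏ i, f i (z i)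
      = ∑ z : ι → ZMod 2, (1 + signChar R (∑ i, z i)) * ∏ i, f i (z i) := by
        simp only [one_add_signChar, ite_mul, zero_mul, Finset.mul_sum, ← Finset.sum_filter]
    _ = ∑ z : ι → ZMod 2, ∏ i, f i (z i)
          + ∑ z : ι → ZMod 2, signChar R (∑ i, z i) * ∏ i, f i (z i) := by
        simp only [add_mul, one_mul, Finset.sum_add_distrib]
    _ = ∏ i, (f i 0 + f i 1) + ∏ i, (f i 0 - f i 1) := by
        rw [sum_pi_prod_zmod_two, hsigned]

end EvenPatterns

/-- The contribution of one tensor factor `p` to the weight monomial: `x` for the identity and `y`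
for any other Pauli matrix. -/
def localFactor {R : Type*} (x y : R) (p : ZMod 2 × ZMod 2) : R :=
  if p = 0 then x else y

theorem pow_sub_wt_mul_pow_wt {M : Type*} [CommMonoid M] {n : ℕ} (v : Fin n → ZMod 2 × ZMod 2)
    (x y : M) :
    x ^ (n - wt v) * y ^ wt v = ∏ i, localFactor x y (v i) := by
  simp only [localFactor]
  rw [prod_univ_ite_const, Fintype.card_fin]
  rfl

theorem localFactor_of_fst_ne_zero {R : Type*} (x y : R) {p : ZMod 2 × ZMod 2} (hp : p.1 ≠ 0) :
    localFactor x y p = y :=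
  if_neg fun h => hp (congrArg Prod.fst h)

theorem localFactor_add_localFactor {R : Type*} [NonAssocSemiring R] (x y : R)
    (p : ZMod 2 × ZMod 2) :
    localFactor x y (p + (0, 0)) + localFactor x y (p + (0, 1))
      = if p.1 = 0 then x + y else 2 * y := by
  split_ifs with hp
  · obtain ⟨a, c⟩ := p
    obtain rfl : a = 0 := hp
    obtain rfl | rfl : c = 0 ∨ c = 1 := by revert c; decide
    · simp [localFactor]
    · simp [localFactor, add_comm, CharTwo.add_self_eq_zero]
  · rw [localFactor_of_fst_ne_zero x y (by simpa using hp),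
      localFactor_of_fst_ne_zero x y (by simpa using hp), two_mul]

/-- The number of qubits on which a Pauli string has an X-factor, that is, acts as X or Y. -/
def xWeight {n : ℕ} (v : Fin n → ZMod 2 × ZMod 2) : ℕ :=
  (Finset.univ.filter fun i => (v i).1 ≠ 0).card

theorem xWeight_smul_Zbar_add_Mk {n k : ℕ} (hkn : k ≤ n) (b : ZMod 2) :
    xWeight (b • Zbar n + Mk n k) = k := by
  have hfst (i : Fin n) : ((b • Zbar n + Mk n k) i).1 ≠ 0 ↔ (i : ℕ) < k := by
    simp [Zbar, Mk, apply_ite Prod.fst]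
  simp only [xWeight, hfst, Fin.card_filter_val_lt, min_eq_right hkn]

theorem sum_repStab {M : Type*} [AddCommMonoid M] {n : ℕ}
    (F : (Fin n → ZMod 2 × ZMod 2) → M) :
    ∑ s ∈ repStab n, F s = ∑ z : Fin n → ZMod 2 with ∑ i, z i = 0, F fun i => (0, z i) := by
  have hs_eq {s : Fin n → ZMod 2 × ZMod 2} (hs : s ∈ repStab n) : (fun i => (0, (s i).2)) = s :=
    funext fun i => Prod.ext ((Finset.mem_filter.1 hs).2.1 i).symm rfl
  refine Finset.sum_bij' (fun s _ i => (s i).2) (fun z _ i => (0, z i)) ?_ ?_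
    (fun s hs => hs_eq hs) (fun _ _ => rfl) fun s hs => by rw [hs_eq hs]
  · intro s hs
    simpa using (Finset.mem_filter.1 hs).2.2
  · intro z hz
    simpa [repStab] using hz

theorem two_mul_enum_coset_repStab {n : ℕ} (u : Fin n → ZMod 2 × ZMod 2) (x y : ℝ) :
    2 * enum ((repStab n).image fun s => u + s) x y
      = ∏ i, (localFactor x y (u i + (0, 0)) + localFactor x y (u i + (0, 1)))
        + ∏ i, (localFactor x y (u i + (0, 0)) - localFactor x y (u i + (0, 1))) := by
  rw [enum, Finset.sum_image fun _ _ _ _ h => add_left_cancel h, sum_repStab]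
  simp only [pow_sub_wt_mul_pow_wt, Pi.add_apply]
  exact two_mul_sum_even_prod fun i c => localFactor x y (u i + (0, c))

theorem weight_enumerator_coset_g_general {n : ℕ} (u : Fin n → ZMod 2 × ZMod 2)
    (hu : 0 < xWeight u) (x y : ℝ) :
    enum ((repStab n).image fun s => u + s) x y
      = (1 / 2) * (x + y) ^ (n - xWeight u) * (2 * y) ^ xWeight u := by
  obtain ⟨j, hj⟩ := Finset.card_pos.1 hu
  have hXj : (u j).1 ≠ 0 := (Finset.mem_filter.1 hj).2
  have hdiff : ∏ i, (localFactor x y (u i + (0, 0)) - localFactor x y (u i + (0, 1))) = 0 := by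
    refine Finset.prod_eq_zero (Finset.mem_univ j) ?_
    rw [localFactor_of_fst_ne_zero x y (by simpa using hXj),
      localFactor_of_fst_ne_zero x y (by simpa using hXj), sub_self]
  have hsum : ∏ i, (localFactor x y (u i + (0, 0)) + localFactor x y (u i + (0, 1)))
      = (x + y) ^ (n - xWeight u) * (2 * y) ^ xWeight u := by
    simp only [localFactor_add_localFactor]
    rw [prod_univ_ite_const, Fintype.card_fin, xWeight]
  have htwo := two_mul_enum_coset_repStab u x y
  rw [hsum, hdiff] at htwo
  linarith

theorem weight_enumerator_coset_g (n k : ℕ) (hn : 1 ≤ n) (hk1 : 1 ≤ k) (hkn : k ≤ n)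
    (b : ZMod 2) (x y : ℝ) :
    enum ((repStab n).image fun s => (b • Zbar n + Mk n k) + s) x y
      = (1 / 2) * (x + y) ^ (n - k) * (2 * y) ^ k := by
  have hX := xWeight_smul_Zbar_add_Mk hkn b
  simpa only [hX] using weight_enumerator_coset_g_general _ (hk1.trans_eq hX.symm) x y
end

section
/- Let n ≥ 1 and 0 ≤ k ≤ n, and let N(S) = {v : Fin n → ZMod 2 × ZMod 2 | (v i).1 = (v j).1 for all i, j} be the normalizer of the stabilizer group of the [[n,1]] Z-type repetition code. For the Pauli string M_k (X-factors on the first k qubits), the weight enumerator of the normalizer coset M_k + N(S) equals 2·(g_{k,n}(x,y) + g_{n−k,n}(x,y)) for all real x, y. -/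
/-- The normalizer of the stabilizer group of the `[[n,1]]` Z-type repetition code:
Pauli strings with constant X-part. -/
def repNorm (n : ℕ) : Finset (Fin n → ZMod 2 × ZMod 2) :=
  Finset.univ.filter fun v => ∀ i j, (v i).1 = (v j).1

section Hamming

variable {ι : Type*} [Fintype ι]

theorem prod_ite_eq_zero_eq_pow_hammingNorm {β : ι → Type*} [∀ i, Zero (β i)]
    [∀ i, DecidableEq (β i)] {R : Type*} [CommMonoid R] (v : ∀ i, β i) (a b : R) :
    ∏ i, (if v i = 0 then a else b) =
      a ^ (Fintype.card ι - hammingNorm v) * b ^ hammingNorm v := by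
  have card_zeros : (Finset.univ.filter fun i => v i = 0).card =
      Fintype.card ι - hammingNorm v :=
    Nat.eq_sub_of_add_eq (Finset.card_filter_add_card_filter_not fun i => v i = 0)
  rw [Finset.prod_ite, Finset.prod_const, Finset.prod_const, card_zeros, hammingNorm]

theorem hammingNorm_add_one (u : ι → ZMod 2) :
    hammingNorm (u + 1) = Fintype.card ι - hammingNorm u := by
  have add_one_ne_zero_iff : ∀ a : ZMod 2, a + 1 ≠ 0 ↔ a = 0 := by decide
  simp only [hammingNorm, Pi.add_apply, Pi.one_apply, add_one_ne_zero_iff]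
  exact Nat.eq_sub_of_add_eq (Finset.card_filter_add_card_filter_not fun i => u i = 0)

end Hamming

theorem forall_apply_eq_iff_eq_zero_or_eq_one {ι : Type*} (u : ι → ZMod 2) :
    (∀ i j, u i = u j) ↔ u = 0 ∨ u = 1 := by
  constructor
  · intro hconst
    by_cases hu : u = 0
    · exact .inl hu
    · obtain ⟨j, hj⟩ := Function.ne_iff.mp hu
      exact .inr (funext fun i => (hconst i j).trans (Fin.eq_one_of_ne_zero _ hj))
  · rintro (rfl | rfl) <;> simp

section Enumerator

variable {n : ℕ}

theorem enum_union {S T : Finset (Fin n → ZMod 2 × ZMod 2)} (hST : Disjoint S T) (x y : ℝ) :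
    enum (S ∪ T) x y = enum S x y + enum T x y :=
  Finset.sum_union hST

theorem enum_piFinset (T : Fin n → Finset (ZMod 2 × ZMod 2)) (x y : ℝ) :
    enum (Fintype.piFinset T) x y = ∏ i, ∑ p ∈ T i, if p = 0 then x else y := by
  have monomial_eq_prod (v : Fin n → ZMod 2 × ZMod 2) :
      x ^ (n - wt v) * y ^ wt v = ∏ i, if v i = 0 then x else y := by
    rw [prod_ite_eq_zero_eq_pow_hammingNorm, Fintype.card_fin]
    rfl
  simp only [enum, monomial_eq_prod]
  exact (Finset.prod_univ_sum T fun _ p => if p = 0 then x else y).symm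

end Enumerator

section XPart

variable {n : ℕ}

/-- The X-part of a Pauli string: the bits recording on which qubits it has an X-factor
(so that `X` and `Y` give `1`). -/
def xPart (v : Fin n → ZMod 2 × ZMod 2) : Fin n → ZMod 2 :=
  fun i => (v i).1

/-- The set of Pauli strings with X-part `u`, a coset of the group of Z-type strings. Normalizer
cosets are unions of such sets. -/
def xFiber (u : Fin n → ZMod 2) : Finset (Fin n → ZMod 2 × ZMod 2) :=
  Finset.univ.filter fun v => xPart v = u

theorem mem_xFiber {u : Fin n → ZMod 2} {v : Fin n → ZMod 2 × ZMod 2} :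
    v ∈ xFiber u ↔ xPart v = u := by
  simp [xFiber]

theorem disjoint_xFiber {u w : Fin n → ZMod 2} (huw : u ≠ w) :
    Disjoint (xFiber u) (xFiber w) :=
  Finset.disjoint_left.mpr fun _ hu hw => huw ((mem_xFiber.mp hu).symm.trans (mem_xFiber.mp hw))

theorem xFiber_eq_piFinset (u : Fin n → ZMod 2) :
    xFiber u = Fintype.piFinset fun i => {u i} ×ˢ Finset.univ := by
  ext v
  simp only [mem_xFiber, xPart, funext_iff, Fintype.mem_piFinset, Finset.mem_product,
    Finset.mem_singleton, Finset.mem_univ, and_true]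

theorem enum_xFiber (u : Fin n → ZMod 2) (x y : ℝ) :
    enum (xFiber u) x y = (x + y) ^ (n - hammingNorm u) * (2 * y) ^ hammingNorm u := by
  have sum_zBit (a : ZMod 2) :
      ∑ p ∈ {a} ×ˢ (Finset.univ : Finset (ZMod 2)), (if p = 0 then x else y) =
        if a = 0 then x + y else 2 * y := by
    have sum_bits (f : ZMod 2 → ℝ) : ∑ b, f b = f 0 + f 1 := Fin.sum_univ_two f
    rw [Finset.sum_product, Finset.sum_singleton, sum_bits]
    by_cases ha : a = 0 <;> simp [ha, two_mul]
  simp only [xFiber_eq_piFinset, enum_piFinset, sum_zBit]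
  rw [prod_ite_eq_zero_eq_pow_hammingNorm, Fintype.card_fin]

theorem image_add_xFiber (M : Fin n → ZMod 2 × ZMod 2) (u : Fin n → ZMod 2) :
    (xFiber u).image (fun s => M + s) = xFiber (xPart M + u) := by
  ext v
  have xPart_sub : xPart (v - M) = xPart v - xPart M := rfl
  simp only [Finset.mem_image, mem_xFiber, ← eq_sub_iff_add_eq', exists_eq_right, xPart_sub,
    sub_eq_iff_eq_add']

theorem repNorm_eq_xFiber_union : repNorm n = xFiber 0 ∪ xFiber 1 := by
  ext s
  rw [Finset.mem_union, mem_xFiber, mem_xFiber, ← forall_apply_eq_iff_eq_zero_or_eq_one]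
  simp [repNorm, xPart]

theorem hammingNorm_xPart_Mk {k : ℕ} (hk : k ≤ n) : hammingNorm (xPart (Mk n k)) = k := by
  have xPart_ne_zero_iff (i : Fin n) : xPart (Mk n k) i ≠ 0 ↔ (i : ℕ) < k := by
    by_cases hi : (i : ℕ) < k <;> simp [xPart, Mk, hi]
  simp [hammingNorm, xPart_ne_zero_iff, Fin.card_filter_val_lt, hk]

end XPart

theorem weight_enumerator_normalizer_coset_general {n : ℕ} (hn : 1 ≤ n)
    (M : Fin n → ZMod 2 × ZMod 2) (x y : ℝ) :
    enum ((repNorm n).image fun s => M + s) x y =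
      (x + y) ^ (n - hammingNorm (xPart M)) * (2 * y) ^ hammingNorm (xPart M) +
        (x + y) ^ hammingNorm (xPart M) * (2 * y) ^ (n - hammingNorm (xPart M)) := by
  have : Nonempty (Fin n) := ⟨⟨0, hn⟩⟩
  have coset_eq : (repNorm n).image (fun s => M + s) =
      xFiber (xPart M) ∪ xFiber (xPart M + 1) := by
    rw [repNorm_eq_xFiber_union, Finset.image_union, image_add_xFiber, image_add_xFiber, add_zero]
  have xPart_ne : xPart M ≠ xPart M + 1 := by simp
  have norm_le : hammingNorm (xPart M) ≤ n := by
    simpa using hammingNorm_le_card_fintype (x := xPart M)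
  rw [coset_eq, enum_union (disjoint_xFiber xPart_ne), enum_xFiber, enum_xFiber,
    hammingNorm_add_one, Fintype.card_fin, Nat.sub_sub_self norm_le]

theorem weight_enumerator_normalizer_coset (n k : ℕ) (hn : 1 ≤ n) (hk : k ≤ n) (x y : ℝ) :
    enum ((repNorm n).image fun s => Mk n k + s) x y
      = 2 * ((1 / 2) * (x + y) ^ (n - k) * (2 * y) ^ k
          + (1 / 2) * (x + y) ^ k * (2 * y) ^ (n - k)) := by
  rw [weight_enumerator_normalizer_coset_general hn, hammingNorm_xPart_Mk hk]
  ring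
end

section
/- Let m, n ≥ 1. In the additive group of Pauli strings on Fin m × Fin n, the subgroup generated by the following generators: (a) for each block i and each 0 ≤ j < n−1, the string with X-part 1 exactly at positions (i,j) and (i,j+1) and Z-part 0 everywhere (the X-type within-block repetition generators), and (b) for each 0 ≤ i < m−1, the string with Z-part 1 at every position of blocks i and i+1 and all other entries 0 (the Z^{⊗n}⊗Z^{⊗n} block generators), is exactly the set of strings v such that every block has even X-weight (∑_j (v(i,j)).1 = 0 for all i), the Z-part is constant within each block ((v(i,j)).2 = ζ_i for all j), and ∑_i ζ_i = 0 in ZMod 2. -/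
/-- Generators of type (a): for each block `i` and each `j` with `j+1 < n`, the string
with X-part 1 exactly at positions `(i,j)` and `(i,j+1)`, and Z-part 0 everywhere. -/
def genA (m n : ℕ) : Set (Fin m × Fin n → ZMod 2 × ZMod 2) :=
  {v | ∃ (i : Fin m) (j : ℕ) (h : j + 1 < n),
    v = fun p =>
      (if p.1 = i ∧ ((p.2 : ℕ) = j ∨ (p.2 : ℕ) = j + 1) then 1 else 0, 0)}

/-- Generators of type (b): for each `i` with `i+1 < m`, the string with Z-part 1 at
every position of blocks `i` and `i+1`, and all other entries 0. -/
def genB (m n : ℕ) : Set (Fin m × Fin n → ZMod 2 × ZMod 2) :=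
  {v | ∃ (i : ℕ) (h : i + 1 < m),
    v = fun p =>
      (0, if (p.1 : ℕ) = i ∨ (p.1 : ℕ) = i + 1 then 1 else 0)}

/-!
Signs being immaterial modulo 2, the generators (a) are the vectors `e_{j+1} - e_j` placed in the
X-part of a single block, and the generators (b) are the vectors `e_{i+1} - e_i` with every entry
repeated along a block of the Z-part. So everything reduces to one fact about `Fin k → ZMod N`: the
differences of adjacent basis vectors generate all vectors with coordinate sum zero. Indeed they
telescope to all `e_a - e_b`, and if `∑ a, f a = 0` then `f = ∑ a, f a • (e_a - e_b)` for any
fixed `b`.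
-/

section ZeroSum

variable {ι M : Type*} [Fintype ι] [AddCommGroup M]

variable (ι M) in
/-- The subgroup of vectors with coordinate sum zero; over `ZMod 2` this is the even-weight
code. -/
def zeroSum : AddSubgroup (ι → M) :=
  (∑ i, Pi.evalAddMonoidHom (fun _ : ι => M) i).ker

lemma mem_zeroSum {f : ι → M} : f ∈ zeroSum ι M ↔ ∑ i, f i = 0 := by
  simp [zeroSum, AddMonoidHom.mem_ker]

lemma zeroSum_le [DecidableEq ι] {H : AddSubgroup (ι → M)}
    (hH : ∀ a b x, Pi.single a x - Pi.single b x ∈ H) :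
    zeroSum ι M ≤ H := by
  intro f hf
  rcases isEmpty_or_nonempty ι with _ | ⟨⟨b⟩⟩
  · exact Subsingleton.elim 0 f ▸ H.zero_mem
  have hb : ∑ a, Pi.single b (f a) = (0 : ι → M) := by
    rw [← Pi.single_zero b, ← mem_zeroSum.mp hf]
    exact (map_sum (AddMonoidHom.single (fun _ : ι => M) b) f Finset.univ).symm
  have hf_eq : f = ∑ a, (Pi.single a (f a) - Pi.single b (f a)) := by
    rw [Finset.sum_sub_distrib, hb, sub_zero, Finset.univ_sum_single]
  rw [hf_eq]
  exact H.sum_mem fun a _ => hH a b (f a)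

lemma sub_mem_of_forall_succ_sub_mem {A : Type*} [AddGroup A] {H : AddSubgroup A} {k : ℕ}
    {g : Fin k → A} (hg : ∀ j (hj : j + 1 < k), g ⟨j + 1, hj⟩ - g ⟨j, by omega⟩ ∈ H)
    (a b : Fin k) : g a - g b ∈ H := by
  have hk : 0 < k := a.pos
  have sub_first_mem : ∀ t (ht : t < k), g ⟨t, ht⟩ - g ⟨0, hk⟩ ∈ H := by
    intro t ht
    induction t with
    | zero => simp
    | succ t ih => simpa using H.add_mem (hg t ht) (ih (by omega))
  simpa using H.sub_mem (sub_first_mem a a.2) (sub_first_mem b b.2)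

/-- The differences `e_{j+1} - e_j` of adjacent standard basis vectors of `(ZMod N)^k`. The
position `j` is a natural number with a bound, as in `genA` and `genB`. -/
def adjacentDifferences (N k : ℕ) : Set (Fin k → ZMod N) :=
  {w | ∃ (j : ℕ) (hj : j + 1 < k), w = Pi.single ⟨j + 1, hj⟩ 1 - Pi.single ⟨j, by omega⟩ 1}

theorem closure_adjacentDifferences (N k : ℕ) :
    AddSubgroup.closure (adjacentDifferences N k) = zeroSum (Fin k) (ZMod N) := by
  apply le_antisymm
  · rw [AddSubgroup.closure_le]
    rintro _ ⟨j, hj, rfl⟩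
    simp [mem_zeroSum]
  · refine zeroSum_le fun a b x => ?_
    have hab : (Pi.single a 1 - Pi.single b 1 : Fin k → ZMod N) ∈
        AddSubgroup.closure (adjacentDifferences N k) := by
      refine sub_mem_of_forall_succ_sub_mem (g := fun t => Pi.single t 1) (fun j hj => ?_) a b
      exact AddSubgroup.subset_closure ⟨j, hj, rfl⟩
    simpa [smul_sub, ← Pi.single_smul] using ZMod.smul_mem hab x

lemma adjacentDifferences_two (k : ℕ) : adjacentDifferences 2 k =
    {w | ∃ (j : ℕ) (_ : j + 1 < k),
      w = fun t : Fin k => if (t : ℕ) = j ∨ (t : ℕ) = j + 1 then 1 else 0} := by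
  ext w
  refine exists₂_congr fun j hj => Eq.congr_right (funext fun t => ?_)
  simp only [Pi.sub_apply, Pi.single_apply, Fin.ext_iff]
  by_cases h : (t : ℕ) = j <;> simp [h]

end ZeroSum

lemma iSup_map_single_eq_pi {ι : Type*} [Finite ι] [DecidableEq ι] {M : ι → Type*}
    [∀ i, AddGroup (M i)] (H : ∀ i, AddSubgroup (M i)) :
    ⨆ i, (H i).map (AddMonoidHom.single M i) = AddSubgroup.pi Set.univ H := by
  apply le_antisymm
  · refine iSup_le fun i => ?_
    rintro _ ⟨x, hx, rfl⟩
    exact (AddSubgroup.single_mem_pi i x).mpr fun _ => hx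
  · exact AddSubgroup.pi_le_iff.mpr fun i => le_iSup (fun i => (H i).map _) i

section PauliStrings

variable (m n : ℕ)

/-- The X-type Pauli string with the given X-part on each block. -/
def xString : (Fin m → Fin n → ZMod 2) →+ (Fin m × Fin n → ZMod 2 × ZMod 2) where
  toFun x p := (x p.1 p.2, 0)
  map_zero' := rfl
  map_add' x y := by ext <;> simp

/-- The Z-type Pauli string whose Z-part takes the constant value `ζ i` on block `i`. -/
def zBlockString : (Fin m → ZMod 2) →+ (Fin m × Fin n → ZMod 2 × ZMod 2) where
  toFun ζ p := (0, ζ p.1)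
  map_zero' := rfl
  map_add' ζ η := by ext <;> simp

variable {m n} in
lemma xString_single (i : Fin m) (w : Fin n → ZMod 2) :
    xString m n (Pi.single i w) = fun p => (if p.1 = i then w p.2 else 0, 0) := by
  ext p <;> by_cases h : p.1 = i <;> simp [xString, h]

lemma genA_eq_iUnion_image : genA m n =
    ⋃ i, xString m n '' (AddMonoidHom.single _ i '' adjacentDifferences 2 n) := by
  ext v
  simp only [genA, adjacentDifferences_two, Set.mem_iUnion, Set.mem_image, Set.mem_ofPred_eq,
    AddMonoidHom.single_apply, exists_exists_and_eq_and, xString_single, ite_and]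
  refine exists_congr fun i => ⟨?_, ?_⟩
  · rintro ⟨j, hj, rfl⟩
    exact ⟨_, ⟨j, hj, rfl⟩, rfl⟩
  · rintro ⟨_, ⟨j, hj, rfl⟩, rfl⟩
    exact ⟨j, hj, rfl⟩

lemma genB_eq_image : genB m n = zBlockString m n '' adjacentDifferences 2 m := by
  rw [adjacentDifferences_two]
  ext v
  constructor
  · rintro ⟨i, hi, rfl⟩
    exact ⟨_, ⟨i, hi, rfl⟩, rfl⟩
  · rintro ⟨_, ⟨i, hi, rfl⟩, rfl⟩
    exact ⟨i, hi, rfl⟩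

theorem closure_genA : AddSubgroup.closure (genA m n) =
    (AddSubgroup.pi Set.univ fun _ => zeroSum (Fin n) (ZMod 2)).map (xString m n) := by
  simp only [genA_eq_iUnion_image, AddSubgroup.closure_iUnion, ← AddMonoidHom.map_closure,
    closure_adjacentDifferences, ← AddSubgroup.map_iSup, iSup_map_single_eq_pi]

theorem closure_genB :
    AddSubgroup.closure (genB m n) = (zeroSum (Fin m) (ZMod 2)).map (zBlockString m n) := by
  rw [genB_eq_image, ← AddMonoidHom.map_closure, closure_adjacentDifferences]

end PauliStrings

theorem closure_concat_generators (m n : ℕ) (hm : 1 ≤ m) (hn : 1 ≤ n) :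
    (AddSubgroup.closure (genA m n ∪ genB m n) : Set (Fin m × Fin n → ZMod 2 × ZMod 2))
      = {v | (∀ i, ∑ j, (v (i, j)).1 = 0) ∧
          ∃ ζ : Fin m → ZMod 2,
            (∀ i j, (v (i, j)).2 = ζ i) ∧ ∑ i, ζ i = 0} := by
  ext v
  rw [AddSubgroup.closure_union, closure_genA, closure_genB, SetLike.mem_coe, AddSubgroup.mem_sup]
  constructor
  · rintro ⟨_, ⟨x, hx, rfl⟩, _, ⟨ζ, hζ, rfl⟩, rfl⟩
    exact ⟨fun i => by simpa [xString, zBlockString] using mem_zeroSum.mp (hx i trivial),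
      ζ, fun i j => by simp [xString, zBlockString], mem_zeroSum.mp hζ⟩
  · rintro ⟨hX, ζ, hZ, hζ⟩
    refine ⟨_, ⟨fun i j => (v (i, j)).1, fun i _ => mem_zeroSum.mpr (hX i), rfl⟩,
      _, ⟨ζ, mem_zeroSum.mpr hζ, rfl⟩, ?_⟩
    ext ⟨i, j⟩ <;> simp [xString, zBlockString, hZ]
end

section
/- Let m, n ≥ 1 and let S be the stabilizer group of the n×m concatenated bit- and phase-flip repetition code. For every Pauli string v : Fin m × Fin n → ZMod 2 × ZMod 2 there exists s ∈ S such that the string w = v + s satisfies, for every block i: (w(i,j)).2 = (v(i,j)).2 for all j (the Z-part is unchanged), (w(i,0)).1 = ∑_j (v(i,j)).1, and (w(i,j)).1 = 0 for j ≠ 0. In other words, every Pauli string is equivalent modulo stabilizers to a string with the same Z-part and with the X-weight parity of each block concentrated on the first qubit of that block. -/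
/-- The stabilizer group of the `n × m` concatenated bit- and phase-flip repetition code:
even X-weight in each block, Z-part constant within each block, and the block Z-values
sum to zero. -/
def concatStab (m n : ℕ) : Finset (Fin m × Fin n → ZMod 2 × ZMod 2) :=
  Finset.univ.filter fun v =>
    (∀ i, ∑ j, (v (i, j)).1 = 0) ∧
    ∃ ζ : Fin m → ZMod 2, (∀ i j, (v (i, j)).2 = ζ i) ∧ ∑ i, ζ i = 0

section ConcentrateX

variable {ι κ A B : Type*} [Fintype κ] [DecidableEq κ] [AddCommMonoid A]

/-- The normal form of a string `v` over blocks `ι` and positions `κ`, with X-parts in `A` and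
Z-parts in `B`: the total X-part of each block is concentrated at position `j₀`, and the Z-part is
that of `v`. -/
def concentrateX (j₀ : κ) (v : ι × κ → A × B) : ι × κ → A × B :=
  fun p => (Pi.single (M := fun _ => A) j₀ (∑ j, (v (p.1, j)).1) p.2, (v p).2)

variable (j₀ : κ) (v : ι × κ → A × B) (i : ι)

theorem concentrateX_apply_snd (j : κ) : (concentrateX j₀ v (i, j)).2 = (v (i, j)).2 :=
  rfl

theorem concentrateX_apply_self_fst : (concentrateX j₀ v (i, j₀)).1 = ∑ j, (v (i, j)).1 :=
  Pi.single_eq_same _ _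

variable {j₀} in
theorem concentrateX_apply_fst_of_ne {j : κ} (hj : j ≠ j₀) : (concentrateX j₀ v (i, j)).1 = 0 :=
  Pi.single_eq_of_ne hj _

theorem sum_concentrateX_fst :
    ∑ j, (concentrateX j₀ v (i, j)).1 = ∑ j, (v (i, j)).1 :=
  Fintype.sum_pi_single' j₀ (∑ j, (v (i, j)).1)

end ConcentrateX

theorem sub_mem_concatStab {m n : ℕ} {v w : Fin m × Fin n → ZMod 2 × ZMod 2}
    (hX : ∀ i, ∑ j, (w (i, j)).1 = ∑ j, (v (i, j)).1)
    (hZ : ∀ i j, (w (i, j)).2 = (v (i, j)).2) :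
    w - v ∈ concatStab m n := by
  have even_block (i : Fin m) : ∑ j, ((w - v) (i, j)).1 = 0 := by
    simp only [Pi.sub_apply, Prod.fst_sub, Finset.sum_sub_distrib, hX, sub_self]
  have z_trivial (i : Fin m) (j : Fin n) : ((w - v) (i, j)).2 = 0 := by
    simp only [Pi.sub_apply, Prod.snd_sub, hZ, sub_self]
  exact Finset.mem_filter.mpr
    ⟨Finset.mem_univ _, even_block, 0, z_trivial, Finset.sum_const_zero⟩

theorem concentrateX_sub_mem_concatStab {m n : ℕ} (j₀ : Fin n)
    (v : Fin m × Fin n → ZMod 2 × ZMod 2) :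
    concentrateX j₀ v - v ∈ concatStab m n :=
  sub_mem_concatStab (sum_concentrateX_fst j₀ v) (concentrateX_apply_snd j₀ v)

theorem exists_concat_stabilizer_normal_form (m n : ℕ) (hm : 1 ≤ m) (hn : 1 ≤ n)
    (v : Fin m × Fin n → ZMod 2 × ZMod 2) :
    ∃ s ∈ concatStab m n,
      (∀ i j, ((v + s) (i, j)).2 = (v (i, j)).2) ∧
      (∀ i, ((v + s) (i, (⟨0, hn⟩ : Fin n))).1 = ∑ j, (v (i, j)).1) ∧
      (∀ i, ∀ j : Fin n, (j : ℕ) ≠ 0 → ((v + s) (i, j)).1 = 0) := by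
  let j₀ : Fin n := ⟨0, hn⟩
  refine ⟨concentrateX j₀ v - v, concentrateX_sub_mem_concatStab j₀ v, ?_⟩
  rw [add_sub_cancel]
  exact ⟨concentrateX_apply_snd j₀ v, concentrateX_apply_self_fst j₀ v,
    fun i _ hj => concentrateX_apply_fst_of_ne v i (Fin.ne_of_val_ne hj)⟩
end

section
/- Define ψ(p) = −((1−p)^2·logb 2 ((1−p)^2) + 2·p·(1−p)·logb 2 (p·(1−p)) + p^2·logb 2 (p^2)) for 0 < p < 1/2, the Shannon entropy in bits of the error distribution ((1−p)^2, p(1−p), p^2, p(1−p)) of the independent X-Z channel. Then ψ(0.110027) < 1 and ψ(0.110028) > 1, and consequently there exists p with 0.110027 < p < 0.110028 such that ψ(p) = 1. -/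
/-- The Shannon entropy (in bits) of the error distribution
`((1-p)^2, p(1-p), p^2, p(1-p))` of the independent X-Z channel. -/
noncomputable def indXZEntropy (p : ℝ) : ℝ :=
  -((1 - p) ^ 2 * Real.logb 2 ((1 - p) ^ 2)
    + 2 * p * (1 - p) * Real.logb 2 (p * (1 - p))
    + p ^ 2 * Real.logb 2 (p ^ 2))

/-!
The X and Z errors are independent, so `ψ(p) = 2 h(p) / log 2` with `h` the binary entropy in nats,
and comparing `ψ(p)` with `1` means comparing `2 h(p)` with `log 2`. At the two endpoints
`2 h(p) - log 2` is about `-3.6e-6` and `5.7e-7`. Logarithms of numbers close to `1` are computed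
to within `1e-8` by three terms of `log y = 2 artanh ((y - 1) / (y + 1))`; since `8 p` and `1 - p`
are both close to `1`, writing `log p = log (8 p) - 3 log 2` reduces the comparison to rational
arithmetic and known bounds on `log 2`.
-/

section

open Real

lemma indXZEntropy_eq_two_mul_binEntropy_div (p : ℝ) :
    indXZEntropy p = 2 * binEntropy p / log 2 := by
  rcases eq_or_ne p 0 with rfl | hp₀
  · simp [indXZEntropy]
  rcases eq_or_ne p 1 with rfl | hp₁
  · simp [indXZEntropy]
  simp only [indXZEntropy, logb, binEntropy, log_mul hp₀ (sub_ne_zero.2 hp₁.symm), log_pow,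
    log_inv]
  push_cast
  ring

lemma continuous_indXZEntropy : Continuous indXZEntropy := by
  simp only [funext indXZEntropy_eq_two_mul_binEntropy_div]
  fun_prop

lemma indXZEntropy_lt_one_iff {p : ℝ} : indXZEntropy p < 1 ↔ 2 * binEntropy p < log 2 := by
  rw [indXZEntropy_eq_two_mul_binEntropy_div, div_lt_one (log_pos one_lt_two)]

lemma one_lt_indXZEntropy_iff {p : ℝ} : 1 < indXZEntropy p ↔ log 2 < 2 * binEntropy p := by
  rw [indXZEntropy_eq_two_mul_binEntropy_div, one_lt_div (log_pos one_lt_two)]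

/-- The sum of the first `n` terms of the series `log y = 2 artanh ((y - 1) / (y + 1))`. -/
noncomputable def logPartialSum (n : ℕ) (y : ℝ) : ℝ :=
  2 * ∑ i ∈ Finset.range n, ((y - 1) / (y + 1)) ^ (2 * i + 1) / (2 * i + 1)

/-- The geometric-series bound on the truncation error of `logPartialSum`. -/
noncomputable def logErrorBound (n : ℕ) (y : ℝ) : ℝ :=
  2 * (|(y - 1) / (y + 1)| ^ (2 * n + 1) / (1 - ((y - 1) / (y + 1)) ^ 2))

lemma abs_log_sub_logPartialSum_le {y : ℝ} (hy : 0 < y) (n : ℕ) :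
    |log y - logPartialSum n y| ≤ logErrorBound n y := by
  set x := (y - 1) / (y + 1) with hx
  have hx_lt : |x| < 1 := by
    rw [hx, abs_div, abs_of_pos (by linarith : 0 < y + 1), div_lt_one (by linarith), abs_lt]
    constructor <;> linarith
  have hxy : (1 + x) / (1 - x) = y := by
    rw [hx]
    field_simp
    ring
  have hseries := sum_range_sub_log_div_le hx_lt n
  rw [hxy] at hseries
  have hdiff : log y - logPartialSum n y
      = 2 * (1 / 2 * log y - ∑ i ∈ Finset.range n, x ^ (2 * i + 1) / (2 * i + 1)) := by
    rw [logPartialSum, ← hx]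
    ring
  rw [hdiff, abs_mul, abs_two]
  exact mul_le_mul_of_nonneg_left hseries zero_le_two

lemma binEntropy_eq_mul_log_sub {c : ℝ} (hc : c ≠ 0) (p : ℝ) :
    binEntropy p = p * log c - p * log (c * p) - (1 - p) * log (1 - p) := by
  rcases eq_or_ne p 0 with rfl | hp
  · simp
  rw [binEntropy, log_mul hc hp, log_inv, log_inv]
  ring

lemma abs_binEntropy_sub_le {c p : ℝ} (hc : 0 < c) (hp₀ : 0 < p) (hp₁ : p < 1) (n : ℕ) :
    |binEntropy p - (p * log c - p * logPartialSum n (c * p) - (1 - p) * logPartialSum n (1 - p))|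
      ≤ p * logErrorBound n (c * p) + (1 - p) * logErrorBound n (1 - p) := by
  have hq : 0 < 1 - p := sub_pos.2 hp₁
  rw [binEntropy_eq_mul_log_sub hc.ne' p, abs_sub_comm]
  calc _ = |p * (log (c * p) - logPartialSum n (c * p))
          + (1 - p) * (log (1 - p) - logPartialSum n (1 - p))| := by ring_nf
    _ ≤ p * |log (c * p) - logPartialSum n (c * p)|
          + (1 - p) * |log (1 - p) - logPartialSum n (1 - p)| := by
        refine (abs_add_le _ _).trans_eq ?_
        rw [abs_mul, abs_mul, abs_of_pos hp₀, abs_of_pos hq]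
    _ ≤ _ := by
        gcongr
        · exact abs_log_sub_logPartialSum_le (mul_pos hc hp₀) n
        · exact abs_log_sub_logPartialSum_le hq n

lemma log_eight : log 8 = 3 * log 2 := by
  rw [show (8 : ℝ) = 2 ^ 3 by norm_num, log_pow, Nat.cast_ofNat]

lemma indXZEntropy_lower_endpoint_lt_one : indXZEntropy 0.110027 < 1 := by
  rw [indXZEntropy_lt_one_iff]
  have hbound := (abs_le.1 (abs_binEntropy_sub_le (c := 8) (p := 0.110027)
    (by norm_num) (by norm_num) (by norm_num) 3)).2
  norm_num [logPartialSum, logErrorBound, Finset.sum_range_succ, abs_of_pos, log_eight]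
    at hbound ⊢
  linarith [log_two_gt_d9]

lemma one_lt_indXZEntropy_upper_endpoint : 1 < indXZEntropy 0.110028 := by
  rw [one_lt_indXZEntropy_iff]
  have hbound := (abs_le.1 (abs_binEntropy_sub_le (c := 8) (p := 0.110028)
    (by norm_num) (by norm_num) (by norm_num) 3)).1
  norm_num [logPartialSum, logErrorBound, Finset.sum_range_succ, abs_of_pos, log_eight]
    at hbound ⊢
  linarith [log_two_lt_d9]

end

theorem hashing_point_independent_XZ :
    indXZEntropy 0.110027 < 1 ∧ indXZEntropy 0.110028 > 1 ∧
      ∃ p : ℝ, 0.110027 < p ∧ p < 0.110028 ∧ indXZEntropy p = 1 := by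
  refine ⟨indXZEntropy_lower_endpoint_lt_one, one_lt_indXZEntropy_upper_endpoint, ?_⟩
  obtain ⟨p, ⟨hp_gt, hp_lt⟩, hp⟩ := intermediate_value_Ioo (by norm_num)
    continuous_indXZEntropy.continuousOn
    ⟨indXZEntropy_lower_endpoint_lt_one, one_lt_indXZEntropy_upper_endpoint⟩
  exact ⟨p, hp_gt, hp_lt, hp⟩
end

section
/- Let p = 0.0634. Then (a) the depolarizing-channel entropy satisfies −((1−3p)·logb 2 (1−3p) + 3·p·logb 2 p) > 1, so the random stabilizer (hashing) rate 1 minus this entropy is negative at p; and (b) S_RB(p) < 1, so the rate Q = (1/5)·(1 − S_RB(p)) achieved by the 5-qubit phase-flip repetition code followed by random hashing is positive at p. Hence the 5-qubit repetition code exhibits non-additivity: it achieves a positive rate at a depolarizing noise rate strictly above the hashing point. -/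
/-!
The function `N(t) = -t log₂ t` satisfies the Leibniz rule `N(xy) = y N(x) + x N(y)`. With
`u = 1 - 2p` and `w = 2p`, so that `u + w = 1`, this reduces `S_RB(p)` to a combination of the
values of `N` at six points: `u`, `w`, the total probabilities `(u⁵ ± (u - w)⁵) / 2` of the
`Z`-type errors of even and of odd weight, and the factors `u⁵ + w⁵` and `u³ + w³` of the
normalizer coset weights. Each value is bounded through rational arithmetic alone, since
`N(x) ≤ x m / n` means `1 ≤ xⁿ 2ᵐ`. At `p = 0.0634` the margin `1 - S_RB(p)` is about `3.4e-4`, so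
the fractions `m / n` have to be close one-sided approximations of the numbers `-log₂ x`.
-/

/-- `N(t) = -t·log₂ t` (with `N(0) = 0` by Lean's conventions). -/
noncomputable def Nent (t : ℝ) : ℝ := -(t * Real.logb 2 t)

/-- The entropy `S_RB` of the DiVincenzo–Shor–Smolin rate formula for the 5-qubit
phase-flip repetition code on the depolarizing channel with error probabilities
`(1-3p, p, p, p)`, computed from the coset weight enumerators of the `[[5,1]]`
Z-type repetition code evaluated at `(x, y) = (1-3p, p)`. -/
noncomputable def SRB (p : ℝ) : ℝ :=
  let u := 1 - 2 * p
  let w := 2 * p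
  let fe := (u ^ 5 + (1 - 4 * p) ^ 5) / 2
  let fo := (u ^ 5 - (1 - 4 * p) ^ 5) / 2
  let g : ℕ → ℝ := fun k => (1 / 2) * u ^ (5 - k) * w ^ k
  (Nent fe + Nent fo + 2 * Nent (g 5) + 10 * Nent (g 1) + 10 * Nent (g 4)
      + 20 * Nent (g 2) + 20 * Nent (g 3))
    - (Nent (u ^ 5 + w ^ 5) + 5 * Nent (u ^ 4 * w + u * w ^ 4)
      + 10 * Nent (u ^ 3 * w ^ 2 + u ^ 2 * w ^ 3))

/-- The Shannon entropy, in bits, of the depolarizing channel whose error probabilities are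
`(1 - 3p, p, p, p)`; the hashing rate is `1 - depolarizingEntropy p`. -/
noncomputable def depolarizingEntropy (p : ℝ) : ℝ := Nent (1 - 3 * p) + 3 * Nent p

theorem depolarizingEntropy_eq (p : ℝ) :
    depolarizingEntropy p
      = -((1 - 3 * p) * Real.logb 2 (1 - 3 * p) + 3 * p * Real.logb 2 p) := by
  rw [depolarizingEntropy, Nent, Nent]
  ring

theorem Nent_eq_negMulLog_div (t : ℝ) : Nent t = Real.negMulLog t / Real.log 2 := by
  rw [Nent, Real.negMulLog, Real.logb]
  ring

theorem Nent_mul (x y : ℝ) : Nent (x * y) = y * Nent x + x * Nent y := by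
  simp only [Nent_eq_negMulLog_div, Real.negMulLog_mul]
  ring

theorem Nent_pow (x : ℝ) (n : ℕ) : Nent (x ^ n) = n * x ^ (n - 1) * Nent x := by
  cases n with
  | zero => simp [Nent]
  | succ n =>
    rw [Nent, Nent, Real.logb_pow, Nat.add_sub_cancel]
    ring

theorem Nent_one_half : Nent (1 / 2) = 1 / 2 := by
  rw [Nent, one_div, Real.logb_inv, Real.logb_self_eq_one one_lt_two]
  ring

theorem SRB_half_eq {u w : ℝ} (huw : u + w = 1) :
    SRB (w / 2) = 1 - u ^ 5 + Nent ((u ^ 5 + (u - w) ^ 5) / 2) + Nent ((u ^ 5 - (u - w) ^ 5) / 2)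
      + 5 * u * (1 - w ^ 2 - u ^ 3) * Nent u + 5 * w * (1 - u ^ 2) * Nent w
      - (Nent (u ^ 5 + w ^ 5) + 5 * u * w * Nent (u ^ 3 + w ^ 3)) := by
  have hw : 2 * (w / 2) = w := by ring
  have hu : 1 - w = u := by linarith
  have h_sub : 1 - 4 * (w / 2) = u - w := by linarith
  have h_syndrome_one : u ^ 4 * w + u * w ^ 4 = u * w * (u ^ 3 + w ^ 3) := by ring
  have h_syndrome_two : u ^ 3 * w ^ 2 + u ^ 2 * w ^ 3 = u ^ 2 * w ^ 2 := by
    linear_combination u ^ 2 * w ^ 2 * huw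
  simp only [SRB, hw, hu, h_sub, h_syndrome_one, h_syndrome_two, Nent_mul, Nent_pow, Nent_one_half]
  obtain rfl : w = 1 - u := by linarith
  ring

section RationalBounds

variable {b x : ℝ} {n : ℕ}

theorem logb_pow_mul_pow (hb : 1 < b) (hx : x ≠ 0) (n m : ℕ) :
    Real.logb b (x ^ n * b ^ m) = n * Real.logb b x + m := by
  have hb₀ : 0 < b := one_pos.trans hb
  rw [Real.logb_mul (pow_ne_zero n hx) (pow_ne_zero m hb₀.ne'), Real.logb_pow, Real.logb_pow,
    Real.logb_self_eq_one hb, mul_one]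

theorem neg_div_le_logb_iff (hb : 1 < b) (hx : 0 < x) (hn : 0 < n) (m : ℕ) :
    -(m / n : ℝ) ≤ Real.logb b x ↔ 1 ≤ x ^ n * b ^ m := by
  have hn' : (0 : ℝ) < n := Nat.cast_pos.mpr hn
  rw [← Real.logb_nonneg_iff hb (mul_pos (pow_pos hx n) (pow_pos (one_pos.trans hb) m)),
    logb_pow_mul_pow hb hx.ne', ← neg_div, div_le_iff₀' hn', neg_le_iff_add_nonneg]

theorem logb_le_neg_div_iff (hb : 1 < b) (hx : 0 < x) (hn : 0 < n) (m : ℕ) :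
    Real.logb b x ≤ -(m / n : ℝ) ↔ x ^ n * b ^ m ≤ 1 := by
  have hn' : (0 : ℝ) < n := Nat.cast_pos.mpr hn
  rw [← Real.logb_nonpos_iff hb (mul_pos (pow_pos hx n) (pow_pos (one_pos.trans hb) m)),
    logb_pow_mul_pow hb hx.ne', ← neg_div, le_div_iff₀' hn', le_neg_iff_add_nonpos_right]

theorem Nent_le_mul_div_iff (hx : 0 < x) (hn : 0 < n) (m : ℕ) :
    Nent x ≤ x * (m / n) ↔ 1 ≤ x ^ n * 2 ^ m := by
  rw [← neg_div_le_logb_iff one_lt_two hx hn, Nent, ← mul_neg, mul_le_mul_iff_right₀ hx, neg_le]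

theorem mul_div_le_Nent_iff (hx : 0 < x) (hn : 0 < n) (m : ℕ) :
    x * (m / n) ≤ Nent x ↔ x ^ n * 2 ^ m ≤ 1 := by
  rw [← logb_le_neg_div_iff one_lt_two hx hn, Nent, ← mul_neg, mul_le_mul_iff_right₀ hx, le_neg]

end RationalBounds

theorem one_lt_depolarizingEntropy : 1 < depolarizingEntropy 0.0634 := by
  have h_id : (1 - 3 * 0.0634) * (7 / 23) ≤ Nent (1 - 3 * 0.0634) :=
    mod_cast (mul_div_le_Nent_iff (n := 23) (by norm_num) (by norm_num) 7).mpr (by norm_num)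
  have h_err : 0.0634 * (147 / 37) ≤ Nent 0.0634 :=
    mod_cast (mul_div_le_Nent_iff (n := 37) (by norm_num) (by norm_num) 147).mpr (by norm_num)
  rw [depolarizingEntropy]
  linarith

theorem SRB_lt_one : SRB 0.0634 < 1 := by
  have hu : Nent 0.8732 ≤ 0.8732 * (9 / 46) :=
    mod_cast (Nent_le_mul_div_iff (n := 46) (by norm_num) (by norm_num) 9).mpr (by norm_num)
  have hw : Nent 0.1268 ≤ 0.1268 * (146 / 49) :=
    mod_cast (Nent_le_mul_div_iff (n := 49) (by norm_num) (by norm_num) 146).mpr (by norm_num)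
  have h_even : Nent ((0.8732 ^ 5 + (0.8732 - 0.1268) ^ 5) / 2)
      ≤ (0.8732 ^ 5 + (0.8732 - 0.1268) ^ 5) / 2 * (56 / 39) :=
    mod_cast (Nent_le_mul_div_iff (n := 39) (by norm_num) (by norm_num) 56).mpr (by norm_num)
  have h_odd : Nent ((0.8732 ^ 5 - (0.8732 - 0.1268) ^ 5) / 2)
      ≤ (0.8732 ^ 5 - (0.8732 - 0.1268) ^ 5) / 2 * (243 / 85) :=
    mod_cast (Nent_le_mul_div_iff (n := 85) (by norm_num) (by norm_num) 243).mpr (by norm_num)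
  have h_fifth : (0.8732 ^ 5 + 0.1268 ^ 5) * (222 / 227) ≤ Nent (0.8732 ^ 5 + 0.1268 ^ 5) :=
    mod_cast (mul_div_le_Nent_iff (n := 227) (by norm_num) (by norm_num) 222).mpr (by norm_num)
  have h_cube : (0.8732 ^ 3 + 0.1268 ^ 3) * (53 / 91) ≤ Nent (0.8732 ^ 3 + 0.1268 ^ 3) :=
    mod_cast (mul_div_le_Nent_iff (n := 91) (by norm_num) (by norm_num) 53).mpr (by norm_num)
  rw [show (0.0634 : ℝ) = 0.1268 / 2 by norm_num, SRB_half_eq (u := 0.8732) (by norm_num)]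
  linarith

theorem five_rep_nonadditivity_at_0634 :
    -- (a) at p = 0.0634 the depolarizing-channel entropy exceeds 1, so the hashing
    -- rate 1 minus this entropy is negative;
    (-((1 - 3 * (0.0634 : ℝ)) * Real.logb 2 (1 - 3 * (0.0634 : ℝ))
        + 3 * 0.0634 * Real.logb 2 0.0634) > 1) ∧
    (1 - -((1 - 3 * (0.0634 : ℝ)) * Real.logb 2 (1 - 3 * (0.0634 : ℝ))
        + 3 * 0.0634 * Real.logb 2 0.0634) < 0) ∧
    -- (b) S_RB(0.0634) < 1, so the rate of the 5-qubit repetition code followed by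
    -- random hashing is positive.
    SRB 0.0634 < 1 ∧ (1 / 5 : ℝ) * (1 - SRB 0.0634) > 0 := by
  have h_hash := one_lt_depolarizingEntropy
  have h_rep := SRB_lt_one
  rw [depolarizingEntropy_eq] at h_hash
  exact ⟨h_hash, by linarith, h_rep, by linarith⟩
end
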